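/- arXiv:2210.16490 — 2 statements merged into one kernel-verified Lean document; each statement's English description precedes it below -/
import Mathlib

section
/- Let C be a linear code over a finite field F_q of length n (a subspace of F_q^n), identified with coordinate set E = {1,...,n}. For X ⊆ E define α_C(X) = log_q |C\(E−X)| (the log-size of the code punctured on E−X) and β_C(X) = log_q |C^⊥\(E−X)|. Then, for every subset X ⊆ E, |E − X| − α_C(E − X) = β_C(E) − β_C(X); i.e., (E, α_C, β_C) is a demi-matroid. -/
open Finset

variable {ι F : Type*} [Fintype ι] [DecidableEq ι] [Field F] [Fintype F]

/-- Projection of `F^ι` onto the coordinates in `X`. -/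
def proj (F : Type*) [Field F] (X : Finset ι) : (ι → F) →ₗ[F] ({i // i ∈ X} → F) :=
  LinearMap.funLeft F F (fun i => i.1)

/-- The punctured code `C \ (E - X)`: the projection of `C` onto the coordinates in `X`. -/
def punct (C : Submodule F (ι → F)) (X : Finset ι) : Submodule F ({i // i ∈ X} → F) :=
  C.map (proj F X)

/-- The dual code of `C` with respect to the standard inner product. -/
def dualCode (C : Submodule F (ι → F)) : Submodule F (ι → F) where
  carrier := {v | ∀ u ∈ C, ∑ i, u i * v i = 0}
  zero_mem' := by intro u hu; simp
  add_mem' := by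
    intro a b ha hb u hu
    simp only [Set.mem_setOf_eq] at ha hb
    simp only [Pi.add_apply, mul_add, Finset.sum_add_distrib, ha u hu, hb u hu, add_zero]
  smul_mem' := by
    intro c v hv u hu
    simp only [Set.mem_setOf_eq] at hv
    simp only [Pi.smul_apply, smul_eq_mul, mul_left_comm, ← Finset.mul_sum, hv u hu, mul_zero]

/-- `α_C(X) = log_q |C \ (E - X)|`. -/
noncomputable def alphaC (C : Submodule F (ι → F)) (q : ℕ) (X : Finset ι) : ℝ :=
  Real.logb q (Nat.card (punct C X))

theorem aux_finrank_map {K V V' : Type*} [Field K] [AddCommGroup V] [Module K V]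
    [AddCommGroup V'] [Module K V'] {f : V →ₗ[K] V'} (hf : Function.Injective f)
    (p : Submodule K V) : Module.finrank K (p.map f) = Module.finrank K p :=
  (Submodule.equivMapOfInjective f hf p).finrank_eq.symm

theorem aux_finrank_dual {κ K : Type*} [Fintype κ] [DecidableEq κ] [Field K] [Fintype K]
    (W : Submodule K (κ → K)) :
    Module.finrank K W + Module.finrank K (dualCode W) = Fintype.card κ := by
  have h := Subspace.finrank_add_finrank_dualCoannihilator_eq
    (W.map (dotProductEquiv K κ).toLinearMap)
  have h2 : (W.map (dotProductEquiv K κ).toLinearMap).dualCoannihilator = dualCode W := by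
    ext v
    rw [Submodule.mem_dualCoannihilator]
    constructor
    · intro hv u hu
      exact hv _ (Submodule.mem_map_of_mem hu)
    · rintro hv _ ⟨u, hu, rfl⟩
      exact hv u hu
  rw [h2, LinearEquiv.finrank_map_eq, Module.finrank_fintype_fun_eq_card] at h
  exact h

theorem aux_alpha {κ K : Type*} [Fintype κ] [DecidableEq κ] [Field K] [Fintype K]
    (W : Submodule K (κ → K)) (X : Finset κ) :
    alphaC W (Fintype.card K) X = Module.finrank K (punct W X) := by
  have h1 : (1 : ℝ) < Fintype.card K := by exact_mod_cast Fintype.one_lt_card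
  unfold alphaC
  rw [Module.natCard_eq_pow_finrank (K := K), Nat.card_eq_fintype_card, Nat.cast_pow,
    Real.logb_pow, Real.logb_self_eq_one h1, mul_one]

theorem aux_univ {κ K : Type*} [Fintype κ] [DecidableEq κ] [Field K] [Fintype K]
    (W : Submodule K (κ → K)) :
    Module.finrank K (punct W Finset.univ) = Module.finrank K W := by
  unfold punct
  apply aux_finrank_map
  intro a b h
  ext i
  exact congrFun h ⟨i, Finset.mem_univ i⟩

/-- Extension by zero. -/
def auxExt {κ K : Type*} [DecidableEq κ] [Field K] (Y : Finset κ) :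
    ({i // i ∈ Y} → K) →ₗ[K] (κ → K) where
  toFun f i := if h : i ∈ Y then f ⟨i, h⟩ else 0
  map_add' a b := by ext i; by_cases h : i ∈ Y <;> simp [h]
  map_smul' a b := by ext i; by_cases h : i ∈ Y <;> simp [h]

theorem aux_sum {κ K : Type*} [Fintype κ] [DecidableEq κ] [Field K] (Y : Finset κ)
    (u v : κ → K) (hv : ∀ i, i ∉ Y → v i = 0) :
    ∑ i, u i * v i = ∑ i : {i // i ∈ Y}, u i.1 * v i.1 := by
  rw [Finset.sum_coe_sort Y (fun i => u i * v i)]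
  symm
  apply Finset.sum_subset (Finset.subset_univ _)
  intro i _ hi
  rw [hv i hi, mul_zero]

theorem aux_ker {κ K : Type*} [Fintype κ] [DecidableEq κ] [Field K] [Fintype K]
    (C : Submodule K (κ → K)) (X : Finset κ) :
    dualCode C ⊓ LinearMap.ker (proj K X) = (dualCode (punct C Xᶜ)).map (auxExt Xᶜ) := by
  ext v
  constructor
  · rintro ⟨h1, h2⟩
    have h3 : ∀ i, i ∉ Xᶜ → v i = 0 := by
      intro i hi
      rw [Finset.mem_compl, not_not] at hi
      exact congrFun h2 ⟨i, hi⟩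
    refine ⟨proj K Xᶜ v, ?_, ?_⟩
    · rintro _ ⟨u, hu, rfl⟩
      rw [← h1 u hu, aux_sum Xᶜ u v h3]
      rfl
    · ext i
      by_cases h : i ∈ Xᶜ
      · simp only [auxExt, LinearMap.coe_mk, AddHom.coe_mk, dif_pos h]; rfl
      · simp only [auxExt, LinearMap.coe_mk, AddHom.coe_mk, dif_neg h, h3 i h]
  · rintro ⟨w, hw, rfl⟩
    have h3 : ∀ i, i ∉ Xᶜ → auxExt Xᶜ w i = 0 := by
      intro i h
      simp only [auxExt, LinearMap.coe_mk, AddHom.coe_mk, dif_neg h]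
    refine ⟨?_, ?_⟩
    · intro u hu
      rw [aux_sum Xᶜ u _ h3, ← hw _ (Submodule.mem_map_of_mem hu)]
      apply Finset.sum_congr rfl
      intro i _
      simp only [auxExt, LinearMap.coe_mk, AddHom.coe_mk, dif_pos i.2]
      rfl
    · ext i
      exact h3 i.1 (by simp)

/-- For a linear code `C` over `F_q` with coordinate set `E`, writing
`β_C = α_{C^⊥}`, one has `|E - X| - α_C(E - X) = β_C(E) - β_C(X)` for all `X ⊆ E`;
i.e. `(E, α_C, β_C)` is a demi-matroid. -/
theorem stmt_10 (q : ℕ) (hq : Fintype.card F = q) (C : Submodule F (ι → F)) :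
    ∀ X : Finset ι,
      ((Xᶜ.card : ℝ)) - alphaC C q Xᶜ
        = alphaC (dualCode C) q Finset.univ - alphaC (dualCode C) q X := by
  intro X
  subst hq
  rw [aux_alpha, aux_alpha, aux_alpha, aux_univ]
  have h1 := aux_finrank_dual (punct C Xᶜ)
  rw [Fintype.card_coe] at h1
  have h2 := LinearMap.finrank_range_add_finrank_ker ((proj F X).domRestrict (dualCode C))
  have h3 : LinearMap.range ((proj F X).domRestrict (dualCode C)) = punct (dualCode C) X :=
    LinearMap.range_domRestrict _ _
  have h4 : Module.finrank F (LinearMap.ker ((proj F X).domRestrict (dualCode C)))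
      = Module.finrank F (dualCode (punct C Xᶜ)) := by
    have h5 : (LinearMap.ker ((proj F X).domRestrict (dualCode C))).map (dualCode C).subtype
        = dualCode C ⊓ LinearMap.ker (proj F X) := by
      rw [LinearMap.ker_domRestrict, Submodule.map_comap_subtype]
    rw [← aux_finrank_map (dualCode C).subtype_injective, h5, aux_ker]
    apply aux_finrank_map
    intro a b h
    ext i
    have := congrFun h i.1
    simpa only [auxExt, LinearMap.coe_mk, AddHom.coe_mk, dif_pos i.2] using this
  rw [h3, h4] at h2
  rw [← h1, ← h2]
  push_cast
  ring
end

section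
/- Let C ⊆ F_q^n be a linear code and f harmonic of degree d. Then Z_{C^⊥, f}^{[m]}(x, y) = (−1)^d · (q^{md} / |C|^m) · Z_{C, f}^{[m]}(x + (q^m − 1)y, x − y), where Z_{C,f}^{[m]}(x,y) = ∑_{X ⊆ E, d ≤ |X| ≤ n−d} f̃(X) A_C^{[m]}(X) x^{|E−X|−d} y^{|X|−d} (MacWilliams-type identity for harmonic m-tuple weight enumerators). -/
open Finset

variable {ι F : Type*} [Fintype ι] [DecidableEq ι] [Field F] [Fintype F] [DecidableEq F]

/-- `f` is harmonic of degree `d`. -/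
def IsHarmonic (d : ℕ) (f : Finset ι → ℝ) : Prop :=
  ∀ Y : Finset ι, Y.card + 1 = d →
    ∑ Z ∈ Finset.univ.filter (fun Z : Finset ι => Z.card = d ∧ Y ⊆ Z), f Z = 0

/-- The extension `f̃(X) = ∑_{Z ⊆ X, |Z| = d} f(Z)`. -/
def tilde (d : ℕ) (f : Finset ι → ℝ) (X : Finset ι) : ℝ :=
  ∑ Z ∈ X.powerset.filter (fun Z : Finset ι => Z.card = d), f Z

/-- The support of a vector. -/
def supp (v : ι → F) : Finset ι := Finset.univ.filter (fun i => v i ≠ 0)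

/-- `A_C^{[m]}(X)`: the number of `m`-tuples of codewords whose supports union to `X`. -/
noncomputable def Acount (C : Submodule F (ι → F)) (m : ℕ) (X : Finset ι) : ℕ :=
  Nat.card {u : Fin m → C // (Finset.univ.biUnion fun j => supp ((u j : ι → F))) = X}

/-- `Z_{C,f}^{[m]}(x,y) = ∑_{X, d ≤ |X| ≤ n-d} f̃(X) A_C^{[m]}(X) x^{|E-X|-d} y^{|X|-d}`. -/
noncomputable def Zcode (C : Submodule F (ι → F)) (m d : ℕ) (f : Finset ι → ℝ)
    (x y : ℝ) : ℝ :=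
  ∑ X ∈ Finset.univ.filter
      (fun X : Finset ι => d ≤ X.card ∧ X.card ≤ Fintype.card ι - d),
    tilde d f X * (Acount C m X : ℝ) * x ^ (Xᶜ.card - d) * y ^ (X.card - d)

lemma aux_harm (d : ℕ) (f : Finset ι → ℝ) (hf : IsHarmonic d f) :
    ∀ (k : ℕ) (W : Finset ι), W.card + 1 + k = d →
      ∑ Z : Finset ι, (if Z.card = d ∧ W ⊆ Z then f Z else 0) = 0 := by
  intro k
  induction k with
  | zero =>
    intro W hW
    have := hf W (by omega)
    rw [Finset.sum_filter] at this
    exact this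
  | succ k ih =>
    intro W hW
    have h1 : ∑ i ∈ Wᶜ, ∑ Z : Finset ι,
        (if Z.card = d ∧ insert i W ⊆ Z then f Z else 0) = 0 := by
      apply Finset.sum_eq_zero
      intro i hi
      apply ih
      rw [Finset.card_insert_of_notMem (by simpa using hi)]
      omega
    rw [Finset.sum_comm] at h1
    have h2 : ∀ Z : Finset ι, ∑ i ∈ Wᶜ,
        (if Z.card = d ∧ insert i W ⊆ Z then f Z else 0)
        = ((d : ℝ) - W.card) * (if Z.card = d ∧ W ⊆ Z then f Z else 0) := by
      intro Z
      by_cases hZ : Z.card = d ∧ W ⊆ Z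
      · rw [if_pos hZ, ← Finset.sum_filter]
        have : Wᶜ.filter (fun i => Z.card = d ∧ insert i W ⊆ Z) = Z \ W := by
          ext i
          simp only [Finset.mem_filter, Finset.mem_compl, Finset.mem_sdiff,
            Finset.insert_subset_iff]
          tauto
        rw [this, Finset.sum_const, Finset.card_sdiff_of_subset hZ.2, nsmul_eq_mul,
          Nat.cast_sub (Finset.card_le_card hZ.2), hZ.1]
      · rw [if_neg hZ, mul_zero]
        apply Finset.sum_eq_zero
        intro i _
        rw [if_neg]
        rintro ⟨a, b⟩
        exact hZ ⟨a, (Finset.subset_insert _ _).trans b⟩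
    simp_rw [h2] at h1
    rw [← Finset.mul_sum] at h1
    rcases mul_eq_zero.1 h1 with h | h
    · have : (d : ℝ) = W.card := by linarith
      have : d = W.card := by exact_mod_cast this
      omega
    · exact h

lemma aux_tilde (d : ℕ) (f : Finset ι → ℝ) (X : Finset ι) :
    tilde d f X = ∑ Z : Finset ι, (if Z.card = d then f Z else 0) *
      (if Z ⊆ X then 1 else 0) := by
  unfold tilde
  rw [Finset.sum_filter]
  rw [← Finset.sum_subset (Finset.subset_univ X.powerset)]
  · apply Finset.sum_congr rfl
    intro Z hZ
    rw [if_pos (Finset.mem_powerset.1 hZ), mul_one]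
  · intro Z _ hZ
    rw [if_neg (fun h => hZ (Finset.mem_powerset.2 h)), mul_zero]

lemma aux_shift (d : ℕ) (f : Finset ι → ℝ) (hf : IsHarmonic d f) (b : ι → ℝ) (c : ℝ) :
    ∑ Z : Finset ι, (if Z.card = d then f Z else 0) * ∏ i ∈ Z, (b i + c)
      = ∑ Z : Finset ι, (if Z.card = d then f Z else 0) * ∏ i ∈ Z, b i := by
  have h1 : ∀ Z : Finset ι, (if Z.card = d then f Z else 0) * ∏ i ∈ Z, (b i + c)
      = ∑ W : Finset ι, ((∏ i ∈ W, b i) * c ^ (d - W.card)) *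
          (if Z.card = d ∧ W ⊆ Z then f Z else 0) := by
    intro Z
    by_cases hZ : Z.card = d
    · rw [if_pos hZ, Finset.prod_add, ← Finset.sum_subset (Finset.subset_univ Z.powerset),
        Finset.mul_sum]
      · apply Finset.sum_congr rfl
        intro W hW
        have hW := Finset.mem_powerset.1 hW
        rw [if_pos ⟨hZ, hW⟩, Finset.prod_const, Finset.card_sdiff_of_subset hW, hZ]
        ring
      · intro W _ hW
        rw [if_neg (fun h => hW (Finset.mem_powerset.2 h.2)), mul_zero]
    · rw [if_neg hZ, zero_mul]
      symm
      apply Finset.sum_eq_zero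
      intro W _
      rw [if_neg (fun h => hZ h.1), mul_zero]
  simp_rw [h1]
  rw [Finset.sum_comm]
  simp_rw [← Finset.mul_sum]
  apply Finset.sum_congr rfl
  intro W _
  rcases lt_trichotomy W.card d with h | h | h
  · rw [aux_harm d f hf (d - W.card - 1) W (by omega), if_neg (by omega)]
    simp
  · have : ∑ Z : Finset ι, (if Z.card = d ∧ W ⊆ Z then f Z else 0) = f W := by
      rw [Finset.sum_eq_single W]
      · simp [h]
      · intro Z _ hZ
        rw [if_neg]
        rintro ⟨h1, h2⟩
        exact hZ (Finset.eq_of_subset_of_card_le h2 (by omega)).symm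
      · simp
    rw [this, if_pos h, h]
    simp [mul_comm]
  · rw [if_neg (by omega), Finset.sum_eq_zero]
    · simp
    · intro Z _
      rw [if_neg]
      rintro ⟨h1, h2⟩
      have := Finset.card_le_card h2
      omega

lemma aux_st (d : ℕ) (f : Finset ι → ℝ) (hf : IsHarmonic d f) (X : Finset ι) (s t : ℝ) :
    ∑ Z : Finset ι, (if Z.card = d then f Z else 0) * ∏ i ∈ Z, (if i ∈ X then s else t)
      = tilde d f X * (s - t) ^ d := by
  have h := aux_shift d f hf (fun i => if i ∈ X then s - t else 0) t
  have e : ∀ i, (if i ∈ X then s - t else 0) + t = if i ∈ X then s else t := by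
    intro i; split_ifs <;> ring
  simp_rw [e] at h
  rw [h, aux_tilde, Finset.sum_mul]
  apply Finset.sum_congr rfl
  intro Z _
  by_cases hZ : Z.card = d
  · rw [if_pos hZ, mul_assoc]
    congr 1
    rw [Finset.prod_ite_zero, Finset.prod_const, hZ]
    by_cases hs : Z ⊆ X
    · rw [if_pos hs, if_pos (fun i hi => hs hi), one_mul]
    · rw [if_neg hs, if_neg (fun h => hs (fun i hi => h i hi)), zero_mul]
  · simp [hZ]

lemma aux_tilde_zero (d : ℕ) (f : Finset ι → ℝ) (hf : IsHarmonic d f) (X : Finset ι)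
    (hX : ¬ (d ≤ X.card ∧ X.card ≤ Fintype.card ι - d)) : tilde d f X = 0 := by
  by_cases h : X.card < d
  · unfold tilde
    rw [Finset.sum_eq_zero]
    intro Z hZ
    simp only [Finset.mem_filter, Finset.mem_powerset] at hZ
    have := Finset.card_le_card hZ.1
    omega
  · have h2 := aux_st d f hf X 0 1
    rw [Finset.sum_eq_zero] at h2
    · rcases mul_eq_zero.1 h2.symm with h3 | h3
      · exact h3
      · exact absurd h3 (pow_ne_zero _ (by norm_num))
    · intro Z _
      by_cases hZ : Z.card = d
      · rw [if_pos hZ]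
        have : ∃ i ∈ Z, i ∈ X := by
          by_contra! hcon
          have hd : Disjoint Z X := Finset.disjoint_left.2 hcon
          have := Finset.card_union_of_disjoint hd
          have := Finset.card_le_univ (Z ∪ X)
          omega
        obtain ⟨i, hi, hiX⟩ := this
        rw [Finset.prod_eq_zero hi (by simp [hiX]), mul_zero]
      · simp [hZ]

lemma aux_sup (Z : Finset ι) (b : ι → ℝ) (x : ℝ) :
    ∑ Y : Finset ι, (if Z ⊆ Y then 1 else 0) * ((∏ i ∈ Y, b i) * x ^ Yᶜ.card)
      = (∏ i ∈ Z, b i) * ∏ i ∈ Zᶜ, (b i + x) := by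
  have h := Finset.prod_add b (fun i => if i ∈ Z then 0 else x) (Finset.univ : Finset ι)
  have e : ∏ i, (b i + if i ∈ Z then 0 else x)
      = (∏ i ∈ Z, b i) * ∏ i ∈ Zᶜ, (b i + x) := by
    rw [← Finset.prod_mul_prod_compl Z]
    congr 1
    · apply Finset.prod_congr rfl
      intro i hi
      simp [hi]
    · apply Finset.prod_congr rfl
      intro i hi
      rw [if_neg (by simpa using hi)]
  rw [← e, h, Finset.powerset_univ]
  apply Finset.sum_congr rfl
  intro Y _
  rw [← Finset.compl_eq_univ_sdiff]
  by_cases hZ : Z ⊆ Y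
  · rw [if_pos hZ, one_mul]
    congr 1
    rw [← Finset.prod_const]
    apply Finset.prod_congr rfl
    intro i hi
    rw [if_neg]
    intro h
    exact (Finset.mem_compl.1 hi) (hZ h)
  · rw [if_neg hZ, zero_mul]
    obtain ⟨i, hi, hY⟩ := Finset.not_subset.1 hZ
    rw [Finset.prod_eq_zero (i := i) (Finset.mem_compl.2 hY) (by simp [hi]), mul_zero]

lemma aux_prodX (X : Finset ι) (u v : ℝ) :
    ∏ i, (if i ∈ X then u else v) = u ^ X.card * v ^ Xᶜ.card := by
  rw [← Finset.prod_mul_prod_compl X, Finset.prod_congr rfl (g := fun _ => u),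
    Finset.prod_congr (s₁ := Xᶜ) rfl (g := fun _ => v), Finset.prod_const, Finset.prod_const]
  · intro i hi
    rw [if_neg (by simpa using hi)]
  · intro i hi
    rw [if_pos hi]

lemma aux_main (d : ℕ) (f : Finset ι → ℝ) (hf : IsHarmonic d f) (X : Finset ι)
    (Q x y : ℝ) (hu : x - y ≠ 0) (hv : x + (Q - 1) * y ≠ 0) :
    ∑ Y : Finset ι, tilde d f Y * ((∏ i ∈ Y, (if i ∈ X then -1 else Q - 1)) *
        (x ^ Yᶜ.card * y ^ Y.card))
      = tilde d f X * ((x - y) ^ X.card * (x + (Q - 1) * y) ^ Xᶜ.card *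
          (-(Q * x * y) / ((x - y) * (x + (Q - 1) * y))) ^ d) := by
  generalize htX : tilde d f X = tX
  set b : ι → ℝ := fun i => if i ∈ X then -y else (Q - 1) * y with hb
  set a : ι → ℝ := fun i => if i ∈ X then x - y else x + (Q - 1) * y with ha
  have hba : ∀ i, b i + x = a i := by
    intro i; simp only [hb, ha]; split_ifs <;> ring
  have ha0 : ∀ i, a i ≠ 0 := by
    intro i; simp only [ha]; split_ifs <;> assumption
  have h1 : ∀ Y : Finset ι, (∏ i ∈ Y, (if i ∈ X then -1 else Q - 1)) *
        (x ^ Yᶜ.card * y ^ Y.card) = (∏ i ∈ Y, b i) * x ^ Yᶜ.card := by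
    intro Y
    have : ∏ i ∈ Y, b i = (∏ i ∈ Y, (if i ∈ X then -1 else Q - 1)) * y ^ Y.card := by
      rw [← Finset.prod_const, ← Finset.prod_mul_distrib]
      apply Finset.prod_congr rfl
      intro i _
      simp only [hb]; split_ifs <;> ring
    rw [this]; ring
  simp_rw [h1, aux_tilde d f, Finset.sum_mul]
  rw [Finset.sum_comm]
  simp_rw [mul_assoc, ← Finset.mul_sum, aux_sup, hba]
  have h2 : ∀ Z : Finset ι, (∏ i ∈ Z, b i) * ∏ i ∈ Zᶜ, a i
      = ((x - y) ^ X.card * (x + (Q - 1) * y) ^ Xᶜ.card) *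
        ∏ i ∈ Z, (if i ∈ X then -y / (x - y) else (Q - 1) * y / (x + (Q - 1) * y)) := by
    intro Z
    rw [← aux_prodX, ← Finset.prod_mul_prod_compl Z]
    have : ∏ i ∈ Z, b i = (∏ i ∈ Z, a i) *
        ∏ i ∈ Z, (if i ∈ X then -y / (x - y) else (Q - 1) * y / (x + (Q - 1) * y)) := by
      rw [← Finset.prod_mul_distrib]
      apply Finset.prod_congr rfl
      intro i _
      simp only [hb, ha]; split_ifs <;> field_simp
    rw [this]; ring
  simp_rw [h2]
  have h3 := aux_st d f hf X (-y / (x - y)) ((Q - 1) * y / (x + (Q - 1) * y))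
  have h4 : -y / (x - y) - (Q - 1) * y / (x + (Q - 1) * y)
      = -(Q * x * y) / ((x - y) * (x + (Q - 1) * y)) := by
    rw [div_sub_div _ _ hu hv]; congr 1; ring
  rw [h4, htX] at h3
  calc _ = ((x - y) ^ X.card * (x + (Q - 1) * y) ^ Xᶜ.card) *
      ∑ Z : Finset ι, (if Z.card = d then f Z else 0) *
        ∏ i ∈ Z, (if i ∈ X then -y / (x - y) else (Q - 1) * y / (x + (Q - 1) * y)) := by
        rw [Finset.mul_sum]
        apply Finset.sum_congr rfl
        intro Z _
        ring
    _ = _ := by rw [h3]; ring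

lemma aux_zeta_inj (g h : Finset ι → ℝ)
    (H : ∀ T : Finset ι, ∑ X ∈ T.powerset, g X = ∑ X ∈ T.powerset, h X) : g = h := by
  funext Y
  induction Y using Finset.strongInduction with
  | H Y ih =>
    have := H Y
    rw [← Finset.sum_erase_add _ _ (Finset.mem_powerset_self Y),
      ← Finset.sum_erase_add _ h (Finset.mem_powerset_self Y)] at this
    rw [Finset.sum_congr rfl (g := h)] at this
    · linarith
    · intro X hX
      rw [Finset.mem_erase, Finset.mem_powerset] at hX
      exact ih X (Finset.ssubset_iff_subset_ne.2 ⟨hX.2, hX.1⟩)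

lemma aux_kernel (A A' : Finset ι → ℝ) (K Q : ℝ)
    (H : ∀ T : Finset ι, ∑ X ∈ T.powerset, A' X
      = K * Q ^ T.card * ∑ X ∈ Tᶜ.powerset, A X) (Y : Finset ι) :
    A' Y = K * ∑ X : Finset ι, A X * ∏ i ∈ Y, (if i ∈ X then -1 else Q - 1) := by
  have := aux_zeta_inj A'
    (fun Y => K * ∑ X : Finset ι, A X * ∏ i ∈ Y, (if i ∈ X then -1 else Q - 1)) ?_
  · exact congrFun this Y
  intro T
  rw [H, ← Finset.mul_sum, Finset.sum_comm, mul_assoc]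
  congr 1
  simp_rw [← Finset.mul_sum]
  rw [Finset.mul_sum, ← Finset.sum_subset (Finset.subset_univ Tᶜ.powerset)]
  · apply Finset.sum_congr rfl
    intro X hX
    have hX := Finset.mem_powerset.1 hX
    rw [← Finset.prod_add_one, Finset.prod_congr rfl (g := fun _ => Q), Finset.prod_const]
    · ring
    · intro i hi
      rw [if_neg (fun h => (Finset.mem_compl.1 (hX h)) hi)]
      ring
  · intro X _ hX
    rw [Finset.mem_powerset, Finset.not_subset] at hX
    obtain ⟨i, hi, hT⟩ := hX
    rw [← Finset.prod_add_one, Finset.prod_eq_zero (i := i) (by simpa using hT), mul_zero]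
    simp [hi]

/-- Vectors supported in `T`. -/
def VT (F : Type*) [Field F] (T : Finset ι) : Submodule F (ι → F) where
  carrier := {v | ∀ i, i ∉ T → v i = 0}
  zero_mem' := by intro i _; rfl
  add_mem' := by
    intro a b ha hb i hi
    simp [ha i hi, hb i hi]
  smul_mem' := by
    intro c v hv i hi
    simp [hv i hi]

lemma aux_finrank_VT (T : Finset ι) : Module.finrank F (VT F T) = T.card := by
  let e : VT F T ≃ₗ[F] (T → F) :=
    { toFun := fun v i => v.1 i
      map_add' := fun _ _ => rfl
      map_smul' := fun _ _ => rfl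
      invFun := fun w => ⟨fun i => if h : i ∈ T then w ⟨i, h⟩ else 0,
        fun i hi => by simp [hi]⟩
      left_inv := by
        intro v
        ext i
        by_cases h : i ∈ T
        · simp [h]
        · simp [h, v.2 i h]
      right_inv := by
        intro w
        ext i
        simp }
  rw [e.finrank_eq]
  simp

lemma aux_zeta_A (C : Submodule F (ι → F)) (m : ℕ) (T : Finset ι) :
    ∑ X ∈ T.powerset, (Acount C m X : ℝ)
      = ((Fintype.card F : ℝ) ^ Module.finrank F (C ⊓ VT F T : Submodule F (ι → F))) ^ m := by
  classical
  have h1 : ∀ X : Finset ι, Acount C m X = ((Finset.univ : Finset (Fin m → C)).filter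
      (fun u => (Finset.univ.biUnion fun j => supp ((u j : ι → F))) = X)).card := by
    intro X
    unfold Acount
    rw [Nat.card_eq_fintype_card, Fintype.card_subtype]
  simp_rw [h1]
  rw [← Nat.cast_sum, Finset.sum_card_fiberwise_eq_card_filter]
  have h2 : ((Finset.univ : Finset (Fin m → C)).filter
      (fun u => (Finset.univ.biUnion fun j => supp ((u j : ι → F))) ∈ T.powerset)).card
      = Nat.card (Fin m → (C ⊓ VT F T : Submodule F (ι → F))) := by
    rw [← Fintype.card_subtype, ← Nat.card_eq_fintype_card]
    have key : ∀ v : ι → F, supp v ⊆ T ↔ v ∈ VT F T := by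
      intro v
      constructor
      · intro h i hi
        by_contra hne
        exact hi (h (by simp [supp, hne]))
      · intro h i hi
        by_contra hne
        simp only [supp, Finset.mem_filter] at hi
        exact hi.2 (h i hne)
    apply Nat.card_congr
    exact
      { toFun := fun u j => ⟨(u.1 j).1, (u.1 j).2, (key _).1 (by
          have := Finset.mem_powerset.1 u.2
          rw [Finset.biUnion_subset] at this
          exact this j (Finset.mem_univ _))⟩
        invFun := fun w => ⟨fun j => ⟨(w j).1, (w j).2.1⟩, by
          rw [Finset.mem_powerset, Finset.biUnion_subset]
          intro j _
          exact (key _).2 (w j).2.2⟩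
        left_inv := fun u => rfl
        right_inv := fun w => rfl }
  rw [h2, Nat.card_fun, Nat.card_eq_fintype_card, Nat.card_eq_fintype_card, Fintype.card_fin,
    Module.card_eq_pow_finrank (K := F)]
  push_cast
  rfl

lemma aux_dim (C : Submodule F (ι → F)) (T : Finset ι) :
    Module.finrank F (dualCode C ⊓ VT F T : Submodule F (ι → F)) + Module.finrank F C
      = T.card + Module.finrank F (C ⊓ VT F Tᶜ : Submodule F (ι → F)) := by
  let B : LinearMap.BilinForm F (ι → F) := dotProductBilin F F
  have hBa : ∀ u v, B u v = ∑ i, u i * v i := fun u v => rfl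
  have hker : LinearMap.ker B = ⊥ := by
    rw [eq_bot_iff]
    intro u hu
    rw [LinearMap.mem_ker] at hu
    rw [Submodule.mem_bot]
    funext i
    have := LinearMap.congr_fun hu (Pi.single i 1)
    rw [hBa] at this
    simpa [Pi.single_apply] using this
  have horth : B.orthogonal (C ⊔ VT F Tᶜ) = dualCode C ⊓ VT F T := by
    ext v
    rw [LinearMap.BilinForm.mem_orthogonal_iff, Submodule.mem_inf]
    constructor
    · intro h
      refine ⟨fun u hu => h u (Submodule.mem_sup_left hu), fun i hi => ?_⟩
      have : B (Pi.single i 1) v = 0 := h (Pi.single i 1) (Submodule.mem_sup_right (by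
        intro j hj
        rw [Pi.single_apply, if_neg]
        rintro rfl
        exact hj (Finset.mem_compl.2 hi)))
      rw [hBa] at this
      simpa [Pi.single_apply] using this
    · rintro ⟨h1, h2⟩ u hu
      obtain ⟨a, ha, b, hb, rfl⟩ := Submodule.mem_sup.1 hu
      change B (a + b) v = 0
      rw [map_add, LinearMap.add_apply, hBa, hBa, h1 a ha, zero_add]
      apply Finset.sum_eq_zero
      intro i _
      by_cases hi : i ∈ T
      · rw [hb i (by simpa using hi), zero_mul]
      · rw [h2 i hi, mul_zero]
  have h1 := LinearMap.BilinForm.finrank_add_finrank_orthogonal' (B := B) (C ⊔ VT F Tᶜ)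
  have hker' : B.ker = ⊥ := hker
  rw [hker', inf_bot_eq, finrank_bot, horth, Module.finrank_fintype_fun_eq_card] at h1
  have h2 := Submodule.finrank_sup_add_finrank_inf_eq C (VT F Tᶜ)
  rw [aux_finrank_VT] at h2
  have h3 := Finset.card_add_card_compl T
  omega

lemma aux_dual (C : Submodule F (ι → F)) (m : ℕ) (T : Finset ι) :
    ∑ X ∈ T.powerset, (Acount (dualCode C) m X : ℝ)
      = ((Nat.card C : ℝ) ^ m)⁻¹ * ((Fintype.card F : ℝ) ^ m) ^ T.card *
        ∑ X ∈ Tᶜ.powerset, (Acount C m X : ℝ) := by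
  have hq : (Fintype.card F : ℝ) ≠ 0 := by
    exact_mod_cast Fintype.card_ne_zero
  have hC : Nat.card C = Fintype.card F ^ Module.finrank F C := by
    rw [Module.natCard_eq_pow_finrank (K := F), Nat.card_eq_fintype_card]
  rw [aux_zeta_A, aux_zeta_A, hC]
  have h := aux_dim C T
  push_cast
  have h' : (Fintype.card F : ℝ) ^ Module.finrank F (dualCode C ⊓ VT F T : Submodule F (ι → F)) *
      (Fintype.card F : ℝ) ^ Module.finrank F C = (Fintype.card F : ℝ) ^ T.card *
      (Fintype.card F : ℝ) ^ Module.finrank F (C ⊓ VT F Tᶜ : Submodule F (ι → F)) := by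
    rw [← pow_add, ← pow_add, h]
  have h0 : ((Fintype.card F : ℝ) ^ Module.finrank F C) ^ m ≠ 0 :=
    pow_ne_zero _ (pow_ne_zero _ hq)
  rw [← pow_mul _ m, mul_comm m T.card, pow_mul _ T.card m, mul_assoc, ← mul_pow, ← h', mul_pow]
  field_simp

lemma aux_Z (C : Submodule F (ι → F)) (m d : ℕ) (f : Finset ι → ℝ) (hf : IsHarmonic d f)
    (x y : ℝ) : Zcode C m d f x y * (x * y) ^ d
      = ∑ X : Finset ι, tilde d f X * (Acount C m X : ℝ) * (x ^ Xᶜ.card * y ^ X.card) := by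
  unfold Zcode
  rw [Finset.sum_mul, ← Finset.sum_subset (Finset.subset_univ (Finset.univ.filter
      (fun X : Finset ι => d ≤ X.card ∧ X.card ≤ Fintype.card ι - d)))]
  · apply Finset.sum_congr rfl
    intro X hX
    simp only [Finset.mem_filter, Finset.mem_univ, true_and] at hX
    have h3 := Finset.card_add_card_compl X
    have e1 : x ^ Xᶜ.card = x ^ (Xᶜ.card - d) * x ^ d := by
      rw [← pow_add]; congr 1; omega
    have e2 : y ^ X.card = y ^ (X.card - d) * y ^ d := by
      rw [← pow_add]; congr 1; omega
    rw [e1, e2]; ring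
  · intro X _ hX
    rw [aux_tilde_zero d f hf X (by simpa using hX)]
    ring

lemma aux_generic (C : Submodule F (ι → F))
    (m d : ℕ) (f : Finset ι → ℝ) (hf : IsHarmonic d f) (Q x y : ℝ)
    (hQ : Q = (Fintype.card F : ℝ) ^ m) (hx : x ≠ 0) (hy : y ≠ 0)
    (hu : x - y ≠ 0) (hv : x + (Q - 1) * y ≠ 0) :
    Zcode (dualCode C) m d f x y
      = (-1 : ℝ) ^ d * (Q ^ d / (Nat.card C : ℝ) ^ m) *
          Zcode C m d f (x + (Q - 1) * y) (x - y) := by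
  apply mul_right_cancel₀ (pow_ne_zero d (mul_ne_zero hx hy))
  have hk := aux_kernel (fun X => (Acount C m X : ℝ)) (fun X => (Acount (dualCode C) m X : ℝ))
    ((Nat.card C : ℝ) ^ m)⁻¹ Q (by intro T; rw [hQ]; exact aux_dual C m T)
  rw [aux_Z _ _ _ _ hf]
  have hZ := aux_Z C m d f hf (x + (Q - 1) * y) (x - y)
  calc _ = ∑ Y : Finset ι, ∑ X : Finset ι, ((Nat.card C : ℝ) ^ m)⁻¹ * (Acount C m X : ℝ) *
        (tilde d f Y * ((∏ i ∈ Y, (if i ∈ X then -1 else Q - 1)) *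
        (x ^ Yᶜ.card * y ^ Y.card))) := by
        apply Finset.sum_congr rfl
        intro Y _
        rw [hk Y, Finset.mul_sum, Finset.mul_sum, Finset.sum_mul]
        apply Finset.sum_congr rfl
        intro X _
        ring
    _ = ∑ X : Finset ι, ((Nat.card C : ℝ) ^ m)⁻¹ * (Acount C m X : ℝ) *
        (tilde d f X * ((x - y) ^ X.card * (x + (Q - 1) * y) ^ Xᶜ.card *
          (-(Q * x * y) / ((x - y) * (x + (Q - 1) * y))) ^ d)) := by
        rw [Finset.sum_comm]
        apply Finset.sum_congr rfl
        intro X _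
        rw [← Finset.mul_sum, aux_main d f hf X Q x y hu hv]
    _ = ((Nat.card C : ℝ) ^ m)⁻¹ * (-(Q * x * y) / ((x - y) * (x + (Q - 1) * y))) ^ d *
        (Zcode C m d f (x + (Q - 1) * y) (x - y) * ((x + (Q - 1) * y) * (x - y)) ^ d) := by
        rw [hZ, Finset.mul_sum]
        apply Finset.sum_congr rfl
        intro X _
        ring
    _ = ((Nat.card C : ℝ) ^ m)⁻¹ * ((-(Q * x * y) / ((x - y) * (x + (Q - 1) * y))) *
        ((x + (Q - 1) * y) * (x - y))) ^ d * Zcode C m d f (x + (Q - 1) * y) (x - y) := by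
        rw [mul_pow _ ((x + (Q - 1) * y) * (x - y))]; ring
    _ = _ := by
        rw [mul_comm (x + (Q - 1) * y) (x - y), div_mul_cancel₀ _ (mul_ne_zero hu hv),
          show -(Q * x * y) = (-1) * Q * (x * y) by ring, mul_pow, mul_pow]
        ring

lemma aux_cont (C : Submodule F (ι → F)) (m d : ℕ) (f : Finset ι → ℝ) (g h : ℝ → ℝ)
    (hg : Continuous g) (hh : Continuous h) : Continuous (fun t => Zcode C m d f (g t) (h t)) := by
  unfold Zcode
  fun_prop

/-- MacWilliams-type identity for harmonic `m`-tuple weight enumerators: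
`Z_{C^⊥,f}^{[m]}(x,y) = (-1)^d (q^{md} / |C|^m) Z_{C,f}^{[m]}(x + (q^m - 1)y, x - y)`. -/
theorem stmt_18 (q : ℕ) (hq : Fintype.card F = q) (C : Submodule F (ι → F))
    (m d : ℕ) (f : Finset ι → ℝ) (hf : IsHarmonic d f) (x y : ℝ) :
    Zcode (dualCode C) m d f x y
      = (-1 : ℝ) ^ d * ((q : ℝ) ^ (m * d) / (Nat.card C : ℝ) ^ m) *
          Zcode C m d f (x + ((q : ℝ) ^ m - 1) * y) (x - y) := by
  have hQ : (q : ℝ) ^ m = (Fintype.card F : ℝ) ^ m := by rw [hq]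
  rw [mul_comm m d, mul_comm d m, pow_mul]
  generalize (q : ℝ) ^ m = Q at hQ ⊢
  have step : ∀ y : ℝ, y ≠ 0 → ∀ x : ℝ, Zcode (dualCode C) m d f x y
      = (-1 : ℝ) ^ d * (Q ^ d / (Nat.card C : ℝ) ^ m) *
          Zcode C m d f (x + (Q - 1) * y) (x - y) := by
    intro y hy
    have hfin : ({0, y, -((Q - 1) * y)} : Set ℝ).Finite := by simp
    have := Continuous.ext_on (f := fun x => Zcode (dualCode C) m d f x y)
      (g := fun x => (-1 : ℝ) ^ d * (Q ^ d / (Nat.card C : ℝ) ^ m) *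
          Zcode C m d f (x + (Q - 1) * y) (x - y)) (hfin.countable.dense_compl ℝ)
      (aux_cont _ _ _ _ _ _ continuous_id continuous_const)
      (continuous_const.mul (aux_cont _ _ _ _ _ _ (by fun_prop) (by fun_prop))) ?_
    · exact fun x => congrFun this x
    · intro x hx
      simp only [Set.mem_compl_iff, Set.mem_insert_iff, Set.mem_singleton_iff, not_or] at hx
      exact aux_generic C m d f hf Q x y hQ hx.1 hy (sub_ne_zero.2 hx.2.1)
        (fun h => hx.2.2 (by linarith))
  have := Continuous.ext_on (f := fun y => Zcode (dualCode C) m d f x y)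
      (g := fun y => (-1 : ℝ) ^ d * (Q ^ d / (Nat.card C : ℝ) ^ m) *
          Zcode C m d f (x + (Q - 1) * y) (x - y)) ((Set.countable_singleton (0 : ℝ)).dense_compl ℝ)
      (aux_cont _ _ _ _ _ _ continuous_const continuous_id)
      (continuous_const.mul (aux_cont _ _ _ _ _ _ (by fun_prop) (by fun_prop))) ?_
  · exact congrFun this y
  · intro y hy
    exact step y (by simpa using hy) x
end
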